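/- arXiv:1801.04450 — 7 statements merged into one kernel-verified Lean document; each statement's English description precedes it below -/
import Mathlib

section
/- Let k be a field and V a finite-dimensional vector space over k. Let G be a subgroup of the group of k-linear automorphisms of V, and let J be a normal subgroup of G such that every element j of J is unipotent (i.e., j - id_V is a nilpotent endomorphism of V). Then there exists a natural number m and a chain of subspaces 0 = V_0 ≤ V_1 ≤ ⋯ ≤ V_m = V such that every element of G maps each V_i into itself, and for every j ∈ J, every i with 1 ≤ i ≤ m, and every v ∈ V_i, one has j v - v ∈ V_{i-1} (that is, J acts as the identity on each quotient V_i/V_{i-1}). -/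
namespace Kolchin

open scoped TensorProduct

/-- The product of the `ρ h - 1` for `h` in a list. -/
def dprod {K H V : Type*} [Field K] [Monoid H] [AddCommGroup V] [Module K V]
    (ρ : Representation K H V) (L : List H) : Module.End K V :=
  (L.map (fun h => ρ h - 1)).prod

section
variable {K H V : Type*} [Field K] [Monoid H] [AddCommGroup V] [Module K V]
    (ρ : Representation K H V)

lemma dprod_nil : dprod ρ [] = 1 := rfl

lemma dprod_cons (h : H) (L : List H) : dprod ρ (h :: L) = (ρ h - 1) * dprod ρ L := by
  simp [dprod]

lemma dprod_append (L M : List H) : dprod ρ (L ++ M) = dprod ρ L * dprod ρ M := by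
  simp [dprod]

lemma burnside [IsAlgClosed K] [FiniteDimensional K V] [ρ.IsIrreducible] (f : Module.End K V) :
    ∃ r : MonoidAlgebra K H, ρ.asAlgebraHom r = f := by
  let M := ρ.asModule
  let A := MonoidAlgebra K H
  let f₀ : M →ₗ[K] M := ρ.asModuleEquiv.symm.toLinearMap ∘ₗ f ∘ₗ ρ.asModuleEquiv.toLinearMap
  let f' : Module.End (Module.End A M) M :=
    { toFun := f₀
      map_add' := f₀.map_add
      map_smul' := by
        intro e x
        obtain ⟨c, rfl⟩ :=
          (IsSimpleModule.algebraMap_end_bijective_of_isAlgClosed (A := A) (V := M) K).2 e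
        exact f₀.map_smul c x }
  obtain ⟨s, hs⟩ := Module.Finite.fg_top (R := K) (M := V)
  obtain ⟨r, hr⟩ := jacobson_density (R := A) f' s
  refine ⟨r, LinearMap.ext_on hs fun v hv => ?_⟩
  exact (hr v hv).symm

lemma irred [IsAlgClosed K] [FiniteDimensional K V] [ρ.IsIrreducible]
    (hu : ∀ h, IsNilpotent (ρ h - 1)) (h : H) : ρ h - 1 = 0 := by
  have tr0 : ∀ g, LinearMap.trace K V (ρ g) = LinearMap.trace K V 1 := by
    intro g
    have := (LinearMap.isNilpotent_trace_of_isNilpotent (hu g)).eq_zero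
    rwa [map_sub, sub_eq_zero] at this
  have tr1 : ∀ r : MonoidAlgebra K H,
      LinearMap.trace K V ((ρ h - 1) * ρ.asAlgebraHom r) = 0 := by
    intro r
    induction r using MonoidAlgebra.induction_on with
    | of g =>
      rw [Representation.asAlgebraHom_of, sub_mul, one_mul, ← map_mul, map_sub, tr0, tr0, sub_self]
    | add a b ha hb => rw [map_add, mul_add, map_add, ha, hb, add_zero]
    | smul c a ha => rw [map_smul, mul_smul_comm, map_smul, ha, smul_zero]
  ext x
  rw [LinearMap.zero_apply, ← Module.forall_dual_apply_eq_zero_iff K]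
  intro φ
  obtain ⟨r, hr⟩ := burnside ρ (φ.smulRight x)
  have h1 := tr1 r
  rw [hr] at h1
  have : (ρ h - 1) * φ.smulRight x = φ.smulRight ((ρ h - 1) x) := by
    ext y; simp [smul_sub]
  rwa [this, LinearMap.trace_smulRight] at h1

lemma mkQ_dprod (U : Submodule K V) (hU : ∀ g, U ≤ U.comap (ρ g)) (L : List H) (v : V) :
    U.mkQ (dprod ρ L v) = dprod (ρ.quotient U hU) L (U.mkQ v) := by
  induction L with
  | nil => rfl
  | cons h L ih =>
    rw [dprod_cons, dprod_cons, Module.End.mul_apply, Module.End.mul_apply, ← ih]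
    simp

lemma coe_dprod (U : Submodule K V) (hU : ∀ g, U ≤ U.comap (ρ g)) (L : List H) (v : U) :
    dprod ρ L v = dprod (ρ.subrepresentation U hU) L v := by
  induction L with
  | nil => rfl
  | cons h L ih =>
    rw [dprod_cons, dprod_cons, Module.End.mul_apply, Module.End.mul_apply, ih]
    simp

lemma pow_sub (U : Submodule K V) (hU : ∀ g, U ≤ U.comap (ρ g)) (hu : ∀ h, IsNilpotent (ρ h - 1))
    (h : H) : IsNilpotent (ρ.subrepresentation U hU h - 1) := by
  obtain ⟨n, hn⟩ := hu h
  refine ⟨n, ?_⟩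
  ext v
  have := coe_dprod ρ U hU (List.replicate n h) v
  simp only [dprod, List.map_replicate, List.prod_replicate, hn] at this
  simpa using this.symm

lemma pow_quot (U : Submodule K V) (hU : ∀ g, U ≤ U.comap (ρ g)) (hu : ∀ h, IsNilpotent (ρ h - 1))
    (h : H) : IsNilpotent (ρ.quotient U hU h - 1) := by
  obtain ⟨n, hn⟩ := hu h
  refine ⟨n, ?_⟩
  ext v
  have := mkQ_dprod ρ U hU (List.replicate n h) v
  simp only [dprod, List.map_replicate, List.prod_replicate, hn] at this
  simpa using this.symm
end

theorem closed_case {K H : Type*} [Field K] [Monoid H] [IsAlgClosed K] (d : ℕ) :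
    ∀ {V : Type*} [AddCommGroup V] [Module K V] [FiniteDimensional K V]
    (ρ : Representation K H V) (_ : Module.finrank K V = d) (_ : ∀ h, IsNilpotent (ρ h - 1)),
    ∃ n : ℕ, ∀ L : List H, L.length = n → dprod ρ L = 0 := by
  induction d using Nat.strong_induction_on with
  | _ d ih =>
  intro V _ _ _ ρ hd hu
  by_cases hV : Subsingleton V
  · exact ⟨0, fun L _ => Subsingleton.elim _ _⟩
  rw [not_subsingleton_iff_nontrivial] at hV
  by_cases hex : ∃ U : Submodule K V, (∀ g, U ≤ U.comap (ρ g)) ∧ U ≠ ⊥ ∧ U ≠ ⊤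
  · obtain ⟨U, hU, hb, ht⟩ := hex
    have h1 : Module.finrank K U < d := hd ▸ Submodule.finrank_lt ht
    have h2 : Module.finrank K (V ⧸ U) < d := by
      have := Submodule.finrank_quotient_add_finrank U
      have : Module.finrank K U ≠ 0 := fun h => hb (Submodule.finrank_eq_zero.1 h)
      omega
    obtain ⟨n, hn⟩ := ih _ h1 (ρ.subrepresentation U hU) rfl (pow_sub ρ U hU hu)
    obtain ⟨m, hm⟩ := ih _ h2 (ρ.quotient U hU) rfl (pow_quot ρ U hU hu)
    refine ⟨n + m, fun L hL => ?_⟩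
    ext v
    rw [← List.take_append_drop n L, dprod_append, Module.End.mul_apply]
    have hmem : dprod ρ (L.drop n) v ∈ U := by
      rw [← Submodule.Quotient.mk_eq_zero, ← Submodule.mkQ_apply, mkQ_dprod ρ U hU,
        hm _ (by simp [hL])]
      rfl
    have := coe_dprod ρ U hU (L.take n) ⟨_, hmem⟩
    rw [hn _ (by simp [hL])] at this
    simpa using this
  · push Not at hex
    have : ρ.IsIrreducible :=
      { exists_pair_ne := ⟨⊥, ⊤, fun h => bot_ne_top (α := Submodule K V)
          (congrArg Subrepresentation.toSubmodule h)⟩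
        eq_bot_or_eq_top := fun S => by
          by_cases hS : S.toSubmodule = ⊥
          · exact Or.inl (Subrepresentation.toSubmodule_injective hS)
          · exact Or.inr (Subrepresentation.toSubmodule_injective
              (hex S.toSubmodule (fun g v hv => S.apply_mem_toSubmodule g hv) hS)) }
    refine ⟨1, fun L hL => ?_⟩
    obtain ⟨h, rfl⟩ := List.length_eq_one_iff.1 hL
    rw [dprod_cons, irred ρ hu, zero_mul]

theorem general_case {k H V : Type*} [Field k] [Monoid H] [AddCommGroup V] [Module k V]
    [FiniteDimensional k V] (ρ : Representation k H V) (hu : ∀ h, IsNilpotent (ρ h - 1)) :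
    ∃ n : ℕ, ∀ L : List H, L.length = n → dprod ρ L = 0 := by
  let K := AlgebraicClosure k
  let b : Module.End k V →ₐ[k] Module.End K (K ⊗[k] V) := Module.End.baseChangeHom k K V
  let σ : Representation K H (K ⊗[k] V) := (b : Module.End k V →* Module.End K (K ⊗[k] V)).comp ρ
  have hσ : ∀ h, σ h - 1 = b (ρ h - 1) := fun h => by rw [map_sub, map_one]; rfl
  obtain ⟨n, hn⟩ := closed_case _ σ rfl (fun h => by rw [hσ]; exact (hu h).map b)
  refine ⟨n, fun L hL => ?_⟩
  have hb : Function.Injective b := LinearMap.baseChangeHom_injective k V K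
  apply hb
  rw [map_zero, ← hn L hL, dprod, dprod, map_list_prod, List.map_map]
  congr 1
  exact List.map_congr_left fun h _ => (hσ h).symm

end Kolchin

/-- Let `k` be a field and `V` a finite-dimensional vector space over `k`.
Let `G` be a subgroup of the group of `k`-linear automorphisms of `V`, and `J` a normal
subgroup of `G` consisting of unipotent automorphisms.  Then there is a chain of subspaces
`0 = V_0 ≤ V_1 ≤ ⋯ ≤ V_m = V` preserved by `G` such that `J` acts as the identity on each
successive quotient. -/
theorem stmt_0 (k : Type*) [Field k] (V : Type*) [AddCommGroup V] [Module k V]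
    [FiniteDimensional k V]
    (G J : Subgroup (V ≃ₗ[k] V)) (hJG : J ≤ G)
    (hnormal : ∀ g ∈ G, ∀ j ∈ J, g * j * g⁻¹ ∈ J)
    (hunip : ∀ j ∈ J, IsNilpotent ((j : V →ₗ[k] V) - LinearMap.id)) :
    ∃ (m : ℕ) (W : ℕ → Submodule k V),
      W 0 = ⊥ ∧ W m = ⊤ ∧ (∀ i : ℕ, W i ≤ W (i + 1)) ∧
      (∀ g ∈ G, ∀ i : ℕ, ∀ v ∈ W i, g v ∈ W i) ∧
      (∀ j ∈ J, ∀ i : ℕ, i < m → ∀ v ∈ W (i + 1), j v - v ∈ W i) := by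
  let ρ : Representation k J V :=
    (LinearEquiv.automorphismGroup.toLinearMapMonoidHom (R := k) (M := V)).comp J.subtype
  have hρ : ∀ (j : J) (v : V), ρ j v = (j : V ≃ₗ[k] V) v := fun _ _ => rfl
  obtain ⟨n, hn⟩ := Kolchin.general_case ρ (fun j => hunip j j.2)
  let W : ℕ → Submodule k V := fun i => ⨅ L : {L : List J // L.length = i},
    LinearMap.ker (Kolchin.dprod ρ L.1)
  have hW : ∀ i v, v ∈ W i ↔ ∀ L : List J, L.length = i → Kolchin.dprod ρ L v = 0 := by
    intro i v
    simp [W, Submodule.mem_iInf]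
  refine ⟨n, W, ?_, ?_, ?_, ?_, ?_⟩
  · rw [eq_bot_iff]
    intro v hv
    simpa [Kolchin.dprod_nil] using (hW 0 v).1 hv [] rfl
  · rw [eq_top_iff]
    intro v _
    rw [hW]
    intro L hL
    rw [hn L hL]; rfl
  · intro i v hv
    rw [hW] at hv ⊢
    intro L hL
    match L, hL with
    | h :: L, hL =>
      rw [Kolchin.dprod_cons, Module.End.mul_apply, hv L (by simpa using hL), map_zero]
  · intro g hg i v hv
    rw [hW] at hv ⊢
    have key : ∀ L : List J, ∃ L' : List J, L'.length = L.length ∧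
        Kolchin.dprod ρ L (g v) = g (Kolchin.dprod ρ L' v) := by
      intro L
      induction L with
      | nil => exact ⟨[], rfl, rfl⟩
      | cons j L ih =>
        obtain ⟨L', hl, he⟩ := ih
        refine ⟨⟨g⁻¹ * j * g, by simpa using hnormal g⁻¹ (inv_mem hg) j j.2⟩ :: L',
          by simp [hl], ?_⟩
        rw [Kolchin.dprod_cons, Kolchin.dprod_cons, Module.End.mul_apply, Module.End.mul_apply, he]
        simp only [LinearMap.sub_apply, Module.End.one_apply, hρ, map_sub, LinearEquiv.mul_apply]
        congr 1
        exact (LinearEquiv.apply_symm_apply g _).symm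
    intro L hL
    obtain ⟨L', hl, he⟩ := key L
    rw [he, hv L' (hl.trans hL), map_zero]
  · intro j hj i _ v hv
    rw [hW] at hv ⊢
    intro L hL
    have := hv (L ++ [⟨j, hj⟩]) (by simp [hL])
    rw [Kolchin.dprod_append, Kolchin.dprod_cons, Kolchin.dprod_nil, mul_one,
      Module.End.mul_apply] at this
    exact this
end

section
/- Let G be a group acting by homeomorphisms on a nonempty topological space X. Suppose the action has only finitely many orbits, and that every orbit is a locally closed subset of X. Then at least one orbit is an open subset of X. -/
/-- If a group `G` acts by homeomorphisms on a nonempty topological space `X`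
with finitely many orbits, each of which is locally closed, then some orbit is open. -/
theorem stmt_1 {G X : Type*} [Group G] [TopologicalSpace X] [Nonempty X]
    [MulAction G X] [ContinuousConstSMul G X]
    (horb : Finite (MulAction.orbitRel.Quotient G X))
    (hlc : ∀ x : X, IsLocallyClosed (MulAction.orbit G x)) :
    ∃ x : X, IsOpen (MulAction.orbit G x) := by
  have hsub : ∀ x y : X, x ∈ closure (MulAction.orbit G y) →
      closure (MulAction.orbit G x) ⊆ closure (MulAction.orbit G y) := by
    intro x y h
    refine closure_minimal ?_ isClosed_closure
    rintro _ ⟨g, rfl⟩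
    refine map_mem_closure (continuous_const_smul g) h ?_
    intro z hz
    exact MulAction.mem_orbit_of_mem_orbit g hz
  have hfin : (Set.range (fun x : X => MulAction.orbit G x)).Finite := by
    refine (Set.finite_range
      (fun q : MulAction.orbitRel.Quotient G X => q.orbit)).subset ?_
    rintro _ ⟨x, rfl⟩
    exact ⟨Quotient.mk'' x, MulAction.orbitRel.Quotient.orbit_mk x⟩
  have hfin2 : (closure '' (Set.range (fun x : X => MulAction.orbit G x))).Finite :=
    hfin.image _
  obtain ⟨m, hm⟩ := hfin2.exists_maximal ((Set.range_nonempty _).image _)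
  obtain ⟨_, ⟨x, rfl⟩, rfl⟩ := hm.prop
  refine ⟨x, ?_⟩
  rw [← isClosed_compl_iff]
  have hcl : IsClosed (⋃ s ∈ (Set.range (fun x : X => MulAction.orbit G x)) \
      {MulAction.orbit G x}, closure s) :=
    hfin.diff.isClosed_biUnion (fun _ _ => isClosed_closure)
  convert hcl using 1
  ext z
  simp only [Set.mem_compl_iff, Set.mem_iUnion, exists_prop]
  constructor
  · intro hz
    refine ⟨MulAction.orbit G z, ⟨⟨z, rfl⟩, ?_⟩, subset_closure (MulAction.mem_orbit_self z)⟩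
    intro h
    exact hz (MulAction.orbit_eq_iff.1 h)
  · rintro ⟨_, ⟨⟨y, rfl⟩, hne⟩, hzy⟩ hzx
    apply hne
    have e : MulAction.orbit G z = MulAction.orbit G x := MulAction.orbit_eq_iff.2 hzx
    have h1 : closure (MulAction.orbit G x) ⊆ closure (MulAction.orbit G y) := e ▸ hsub z y hzy
    have h2 : closure (MulAction.orbit G y) ⊆ closure (MulAction.orbit G x) :=
      hm.le_of_ge ⟨_, ⟨y, rfl⟩, rfl⟩ h1
    obtain ⟨U, Z, hU, hZ, hUZ⟩ := hlc x
    have hzU : z ∈ U := (hUZ ▸ hzx : z ∈ U ∩ Z).1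
    obtain ⟨w, hwU, hwy⟩ := mem_closure_iff.1 hzy U hU hzU
    have hwZ : w ∈ Z :=
      closure_minimal (hUZ ▸ Set.inter_subset_right) hZ (h2 (subset_closure hwy))
    have hwx : w ∈ MulAction.orbit G x := hUZ ▸ ⟨hwU, hwZ⟩
    exact (MulAction.orbit_eq_iff.2 hwy).symm.trans (MulAction.orbit_eq_iff.2 hwx)
end

section
/- Let G be a group acting by homeomorphisms on a topological space X. Suppose the action has exactly n orbits (n finite), and that every orbit is a locally closed subset of X. Then the orbits can be ordered O_1, …, O_n so that there exist closed subsets X = X_0 ⊇ X_1 ⊇ ⋯ ⊇ X_n = ∅ with X_{i-1} \ X_i = O_i for each 1 ≤ i ≤ n; equivalently, for each i the union O_{i+1} ∪ ⋯ ∪ O_n is closed in X and O_i is open in X_{i-1}. -/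
theorem stmt_2_rank {G X : Type*} [Group G] [TopologicalSpace X]
    [MulAction G X] [ContinuousConstSMul G X] (n : ℕ)
    (hfin : Finite (MulAction.orbitRel.Quotient G X))
    (hn : Nat.card (MulAction.orbitRel.Quotient G X) = n)
    (hlc : ∀ x : X, IsLocallyClosed (MulAction.orbit G x)) :
    ∃ r : X → Fin n, Function.Surjective r ∧
      (∀ x y, r x = r y ↔ x ∈ MulAction.orbit G y) ∧
      (∀ x y, x ∈ closure (MulAction.orbit G y) → r y ≤ r x) := by
  classical
  let Q := MulAction.orbitRel.Quotient G X
  have hcl : ∀ x y : X, x ∈ closure (MulAction.orbit G y) →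
      closure (MulAction.orbit G x) ⊆ closure (MulAction.orbit G y) := by
    intro x y h
    apply closure_minimal _ isClosed_closure
    rintro _ ⟨g, rfl⟩
    have h1 : g • x ∈ closure ((fun z => g • z) '' MulAction.orbit G y) :=
      image_closure_subset_closure_image (continuous_const_smul g) ⟨x, h, rfl⟩
    refine closure_mono ?_ h1
    rintro _ ⟨z, hz, rfl⟩
    obtain ⟨k, rfl⟩ := hz
    exact ⟨g * k, mul_smul g k y⟩
  have hanti : ∀ x y : X, closure (MulAction.orbit G x) = closure (MulAction.orbit G y) →
      x ∈ MulAction.orbit G y := by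
    intro x y h
    obtain ⟨U, Z, hU, hZ, hUZ⟩ := hlc x
    have hx : x ∈ MulAction.orbit G x := MulAction.mem_orbit_self x
    have hxy : x ∈ closure (MulAction.orbit G y) := h ▸ subset_closure hx
    have hxU : x ∈ U := (hUZ ▸ hx : x ∈ U ∩ Z).1
    obtain ⟨z, hzU, hzy⟩ := mem_closure_iff.1 hxy U hU hxU
    have hz : z ∈ closure (MulAction.orbit G x) := h ▸ subset_closure hzy
    have hzZ : z ∈ Z := closure_minimal (hUZ ▸ Set.inter_subset_right) hZ hz
    have hzx : z ∈ MulAction.orbit G x := hUZ ▸ ⟨hzU, hzZ⟩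
    rw [← MulAction.orbit_eq_iff.2 hzy, MulAction.orbit_eq_iff.2 hzx]
    exact hx
  let P : PartialOrder Q :=
    { le := fun a b => closure b.orbit ⊆ closure a.orbit
      le_refl := fun a => subset_rfl
      le_trans := fun a b c h1 h2 => h2.trans h1
      le_antisymm := fun a b => by
        induction a using Quotient.inductionOn'
        induction b using Quotient.inductionOn'
        intro h1 h2
        exact Quotient.sound' (hanti _ _ (h2.antisymm h1)) }
  haveI : Finite (LinearExtension Q) := hfin
  haveI : Fintype (LinearExtension Q) := Fintype.ofFinite _
  have hc : Fintype.card (LinearExtension Q) = n := by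
    rw [← Nat.card_eq_fintype_card]; exact hn
  let e : Fin n ≃o LinearExtension Q := Fintype.orderIsoFinOfCardEq _ hc
  let m : X → Q := fun x => Quotient.mk'' x
  refine ⟨fun x => e.symm (toLinearExtension (m x)), ?_, ?_, ?_⟩
  · intro i
    obtain ⟨x, hx⟩ := Quotient.mk''_surjective (e i : Q)
    refine ⟨x, ?_⟩
    show e.symm _ = i
    rw [OrderIso.symm_apply_eq]
    exact hx
  · intro x y
    rw [e.symm.injective.eq_iff]
    exact Quotient.eq''
  · intro x y h
    apply e.symm.monotone
    apply toLinearExtension.monotone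
    exact hcl x y h

/-- If a group `G` acts by homeomorphisms on a topological space `X` with
exactly `n` orbits, each locally closed, then the orbits can be ordered `O_1, …, O_n` so that
there are closed subsets `X = X_0 ⊇ X_1 ⊇ ⋯ ⊇ X_n = ∅` with `X_{i-1} \ X_i = O_i`. -/
theorem stmt_2 {G X : Type*} [Group G] [TopologicalSpace X]
    [MulAction G X] [ContinuousConstSMul G X] (n : ℕ)
    (hfin : Finite (MulAction.orbitRel.Quotient G X))
    (hn : Nat.card (MulAction.orbitRel.Quotient G X) = n)
    (hlc : ∀ x : X, IsLocallyClosed (MulAction.orbit G x)) :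
    ∃ (O : Fin n → Set X) (Xc : Fin (n + 1) → Set X),
      (∀ i, ∃ x : X, O i = MulAction.orbit G x) ∧
      (∀ x : X, ∃ i, O i = MulAction.orbit G x) ∧
      Function.Injective O ∧
      Xc 0 = Set.univ ∧ Xc (Fin.last n) = ∅ ∧
      (∀ i, IsClosed (Xc i)) ∧
      (∀ i : Fin n, Xc i.succ ⊆ Xc i.castSucc) ∧
      (∀ i : Fin n, Xc i.castSucc \ Xc i.succ = O i) := by
  obtain ⟨r, hs, hr, hc⟩ := stmt_2_rank n hfin hn hlc
  have horb : ∀ x, {y | r y = r x} = MulAction.orbit G x := fun x => by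
    ext y; exact hr y x
  refine ⟨fun i => {x | r x = i}, fun i => {x | i ≤ (r x).castSucc}, ?_, ?_, ?_, ?_, ?_, ?_, ?_, ?_⟩
  · intro i
    obtain ⟨x, rfl⟩ := hs i
    exact ⟨x, horb x⟩
  · intro x
    exact ⟨r x, horb x⟩
  · intro i j h
    obtain ⟨x, rfl⟩ := hs i
    have : x ∈ {y | r y = r x} := rfl
    exact (Set.ext_iff.1 h x).1 this
  · ext x; simp
  · ext x
    simp [Fin.castSucc_lt_last]
  · intro i
    have : {x | i ≤ (r x).castSucc} =
        ⋃ j ∈ {j : Fin n | i ≤ j.castSucc}, closure {x | r x = j} := by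
      ext x
      simp only [Set.mem_setOf_eq, Set.mem_iUnion, exists_prop]
      constructor
      · intro h
        exact ⟨r x, h, subset_closure rfl⟩
      · rintro ⟨j, hj, hx⟩
        obtain ⟨y, rfl⟩ := hs j
        rw [horb] at hx
        exact hj.trans (Fin.castSucc_le_castSucc_iff.2 (hc x y hx))
    beta_reduce
    rw [this]
    exact (Set.toFinite _).isClosed_biUnion fun _ _ => isClosed_closure
  · intro i x hx
    exact (Fin.castSucc_lt_succ (i := i)).le.trans hx
  · intro i
    ext x
    simp only [Set.mem_diff, Set.mem_setOf_eq, Fin.le_def, Fin.ext_iff, Fin.val_succ,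
      Fin.val_castSucc]
    omega
end

section
/- Let C be a model category whose underlying category is preadditive, has a zero object, and has countable products. Let (A_n)_{n ∈ ℕ} be objects of C together with morphisms f_n : A_{n+1} ⟶ A_n each of which is a fibration, and suppose A_0 is fibrant. Then the morphism id − shift : ∏_n A_n ⟶ ∏_n A_n, whose n-th component is π_n − f_n ∘ π_{n+1} (where π_n denotes the n-th projection), is a fibration. -/
open CategoryTheory CategoryTheory.Limits

universe v u

/-- `f` is a retract of `g` in the arrow category. -/
def IsRetractOf {C : Type u} [Category.{v} C] {X Y X' Y' : C}
    (f : X ⟶ Y) (g : X' ⟶ Y') : Prop :=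
  ∃ (iX : X ⟶ X') (rX : X' ⟶ X) (iY : Y ⟶ Y') (rY : Y' ⟶ Y),
    iX ≫ rX = 𝟙 X ∧ iY ≫ rY = 𝟙 Y ∧ iX ≫ g = f ≫ iY ∧ g ≫ rY = rX ≫ f

/-- A (Quillen closed) model structure on a finitely bicomplete category `C`: classes of
weak equivalences, fibrations and cofibrations satisfying the two-out-of-three axiom,
closure under retracts, the lifting axioms and the factorization axioms. -/
structure ModelStructure (C : Type u) [Category.{v} C]
    [HasFiniteLimits C] [HasFiniteColimits C] where
  /-- weak equivalences -/
  W : MorphismProperty C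
  /-- fibrations -/
  Fib : MorphismProperty C
  /-- cofibrations -/
  Cof : MorphismProperty C
  W_comp : ∀ {X Y Z : C} (f : X ⟶ Y) (g : Y ⟶ Z), W f → W g → W (f ≫ g)
  W_cancel_left : ∀ {X Y Z : C} (f : X ⟶ Y) (g : Y ⟶ Z), W f → W (f ≫ g) → W g
  W_cancel_right : ∀ {X Y Z : C} (f : X ⟶ Y) (g : Y ⟶ Z), W g → W (f ≫ g) → W f
  W_retract : ∀ {X Y X' Y' : C} (f : X ⟶ Y) (g : X' ⟶ Y'), IsRetractOf f g → W g → W f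
  Fib_retract : ∀ {X Y X' Y' : C} (f : X ⟶ Y) (g : X' ⟶ Y'), IsRetractOf f g → Fib g → Fib f
  Cof_retract : ∀ {X Y X' Y' : C} (f : X ⟶ Y) (g : X' ⟶ Y'), IsRetractOf f g → Cof g → Cof f
  lift_cof_trivFib : ∀ {A B X Y : C} (i : A ⟶ B) (p : X ⟶ Y),
    Cof i → Fib p → W p → HasLiftingProperty i p
  lift_trivCof_fib : ∀ {A B X Y : C} (i : A ⟶ B) (p : X ⟶ Y),
    Cof i → W i → Fib p → HasLiftingProperty i p
  factor_cof_trivFib : ∀ {X Y : C} (f : X ⟶ Y),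
    ∃ (Z : C) (i : X ⟶ Z) (p : Z ⟶ Y), Cof i ∧ Fib p ∧ W p ∧ i ≫ p = f
  factor_trivCof_fib : ∀ {X Y : C} (f : X ⟶ Y),
    ∃ (Z : C) (i : X ⟶ Z) (p : Z ⟶ Y), Cof i ∧ W i ∧ Fib p ∧ i ≫ p = f

namespace ModelStructure

variable {C : Type u} [Category.{v} C] [HasFiniteLimits C] [HasFiniteColimits C]

/-- An object is fibrant if the map to the terminal object is a fibration. -/
def Fibrant (M : ModelStructure C) (X : C) : Prop := M.Fib (terminal.from X)

/-- An object is cofibrant if the map from the initial object is a cofibration. -/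
def Cofibrant (M : ModelStructure C) (X : C) : Prop := M.Cof (initial.to X)

end ModelStructure

/-- In a preadditive model category with a zero object and countable
products, given a tower of fibrations `f n : A (n+1) ⟶ A n` with `A 0` fibrant, the morphism
`id − shift : ∏ A ⟶ ∏ A`, whose `n`-th component is `π n − f n ∘ π (n+1)`, is a fibration. -/
theorem stmt_4 {C : Type u} [Category.{v} C] [Preadditive C] [HasZeroObject C]
    [HasCountableProducts C] [HasFiniteLimits C] [HasFiniteColimits C]
    (M : ModelStructure C) (A : ℕ → C) (f : ∀ n : ℕ, A (n + 1) ⟶ A n)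
    (hf : ∀ n, M.Fib (f n)) (hA0 : M.Fibrant (A 0)) :
    M.Fib (Pi.lift (fun n => Pi.π A n - Pi.π A (n + 1) ≫ f n) : ∏ᶜ A ⟶ ∏ᶜ A) := by
  obtain ⟨Z, i, q, hic, hiw, hq, hfac⟩ := M.factor_trivCof_fib
    (Pi.lift (fun n => Pi.π A n - Pi.π A (n + 1) ≫ f n) : ∏ᶜ A ⟶ ∏ᶜ A)
  have hqn : ∀ n, i ≫ q ≫ Pi.π A n = Pi.π A n - Pi.π A (n + 1) ≫ f n := by
    intro n
    rw [← Category.assoc, hfac, Pi.lift_π]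
  have h0 : ∃ h : Z ⟶ A 0, i ≫ h = Pi.π A 0 := by
    have := M.lift_trivCof_fib i (terminal.from (A 0)) hic hiw hA0
    have sq : CommSq (Pi.π A 0) i (terminal.from (A 0)) (terminal.from Z) :=
      ⟨Subsingleton.elim _ _⟩
    exact ⟨sq.lift, sq.fac_left⟩
  have hs : ∀ (n : ℕ) (h : {h : Z ⟶ A n // i ≫ h = Pi.π A n}),
      ∃ h' : {h' : Z ⟶ A (n + 1) // i ≫ h' = Pi.π A (n + 1)},
        h'.1 ≫ f n = h.1 - q ≫ Pi.π A n := by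
    rintro n ⟨h, hh⟩
    have := M.lift_trivCof_fib i (f n) hic hiw (hf n)
    have sq : CommSq (Pi.π A (n + 1)) i (f n) (h - q ≫ Pi.π A n) :=
      ⟨by rw [Preadditive.comp_sub, hh, hqn]; abel⟩
    exact ⟨⟨sq.lift, sq.fac_left⟩, sq.fac_right⟩
  obtain ⟨a, ha⟩ := h0
  choose s hs using hs
  let t : ∀ n : ℕ, {h : Z ⟶ A n // i ≫ h = Pi.π A n} := fun n => Nat.rec ⟨a, ha⟩ s n
  have ht : ∀ n, (t (n + 1)).1 ≫ f n = (t n).1 - q ≫ Pi.π A n := fun n => hs n (t n)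
  refine M.Fib_retract _ q ⟨i, Pi.lift (fun n => (t n).1), 𝟙 _, 𝟙 _, ?_, ?_, ?_, ?_⟩ hq
  · refine Pi.hom_ext _ _ fun n => ?_
    rw [Category.assoc, Pi.lift_π, (t n).2, Category.id_comp]
  · simp
  · rw [hfac, Category.comp_id]
  · refine Pi.hom_ext _ _ fun n => ?_
    rw [Category.comp_id, Category.assoc, Pi.lift_π, Preadditive.comp_sub, Pi.lift_π,
      ← Category.assoc, Pi.lift_π, ht]
    abel
end

section
/- Let C be a model category, I a set, and suppose C has products indexed by I. Let (A_i)_{i ∈ I} be a family of fibrant objects of C, and let γ : C ⟶ Ho(C) denote the localization functor at the weak equivalences. Then γ(∏_{i ∈ I} A_i), together with the images under γ of the product projections ∏_{i ∈ I} A_i ⟶ A_i, is a product of the family (γ(A_i))_{i ∈ I} in Ho(C). -/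
open CategoryTheory CategoryTheory.Limits

universe v u

universe w

open HomotopicalAlgebra in
/-- Products of fibrant objects are fibrant. -/
lemma isFibrant_pi_aux {C : Type*} [Category* C] [ModelCategory C] {I : Type*}
    [HasProductsOfShape I C] (A : I → C) [∀ i, IsFibrant (A i)] : IsFibrant (∏ᶜ A) := by
  rw [isFibrant_iff, fibration_iff, ← trivialCofibrations_rlp]
  intro X Y j hj
  obtain ⟨_, _⟩ := (mem_trivialCofibrations_iff j).1 hj
  refine ⟨fun {f g} sq => ?_⟩
  have sq' : ∀ i, CommSq (f ≫ Pi.π A i) j (terminal.from (A i)) (terminal.from Y) :=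
    fun i => ⟨Subsingleton.elim _ _⟩
  exact ⟨⟨{ l := Pi.lift fun i => (sq' i).lift
            fac_left := by ext i; simp
            fac_right := Subsingleton.elim _ _ }⟩⟩

open HomotopicalAlgebra in
lemma isLimit_pi_aux {C : Type*} [Category* C] [ModelCategory C] {I : Type*}
    [HasProductsOfShape I C] (A : I → C) [∀ i, IsFibrant (A i)]
    {H : Type*} [Category* H] (L : C ⥤ H) [L.IsLocalization (weakEquivalences C)] :
    Nonempty (IsLimit (Fan.mk (L.obj (∏ᶜ A)) (fun i => L.map (Pi.π A i)))) := by
  have := isFibrant_pi_aux A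
  have := Localization.essSurj L (weakEquivalences C)
  -- every object of `H` comes from a cofibrant object
  have key : ∀ Z : H, ∃ (X : C) (_ : IsCofibrant X), Nonempty (L.obj X ≅ Z) := by
    intro Z
    obtain ⟨X, hX, p, _, hp⟩ := CofibrantObject.HoCat.exists_resolution (L.objPreimage Z)
    have := Localization.inverts L (weakEquivalences C) p (by rwa [← weakEquivalence_iff])
    exact ⟨X, hX, ⟨asIso (L.map p) ≪≫ L.objObjPreimageIso Z⟩⟩
  have ex : ∀ (Z : H) (a : ∀ i, Z ⟶ L.obj (A i)),
      ∃ f : Z ⟶ L.obj (∏ᶜ A), ∀ i, f ≫ L.map (Pi.π A i) = a i := by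
    intro Z a
    obtain ⟨X, _, ⟨e⟩⟩ := key Z
    choose b hb using fun i => map_surjective_of_isLocalization L X (A i) (e.hom ≫ a i)
    refine ⟨e.inv ≫ L.map (Pi.lift b), fun i => ?_⟩
    rw [Category.assoc, ← L.map_comp, Pi.lift_π, hb, Iso.inv_hom_id_assoc]
  have uniq : ∀ (Z : H) (f g : Z ⟶ L.obj (∏ᶜ A)),
      (∀ i, f ≫ L.map (Pi.π A i) = g ≫ L.map (Pi.π A i)) → f = g := by
    intro Z f g hfg
    obtain ⟨X, _, ⟨e⟩⟩ := key Z
    rw [← cancel_epi e.hom]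
    obtain ⟨f', hf⟩ := map_surjective_of_isLocalization L X (∏ᶜ A) (e.hom ≫ f)
    obtain ⟨g', hg⟩ := map_surjective_of_isLocalization L X (∏ᶜ A) (e.hom ≫ g)
    rw [← hf, ← hg, ← LeftHomotopyRel.iff_map_eq]
    have h : ∀ i, LeftHomotopyRel (f' ≫ Pi.π A i) (g' ≫ Pi.π A i) := fun i => by
      rw [LeftHomotopyRel.iff_map_eq L, L.map_comp, L.map_comp, hf, hg, Category.assoc,
        Category.assoc, hfg]
    obtain ⟨P, _⟩ := Cylinder.exists_very_good X
    refine ⟨P, ⟨{ h := Pi.lift fun i => ((h i).leftHomotopy P).h, h₀ := ?_, h₁ := ?_ }⟩⟩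
    · ext i
      simp [((h i).leftHomotopy P).h₀]
    · ext i
      simp [((h i).leftHomotopy P).h₁]
  choose l hl using ex
  exact ⟨mkFanLimit _ (fun s => l s.pt s.proj) (fun s i => hl _ _ i)
    (fun s m hm => uniq _ _ _ fun i => (hm i).trans (hl _ _ i).symm)⟩

open HomotopicalAlgebra in
/-- The Mathlib model category attached to a `ModelStructure`. -/
@[reducible]
def ModelStructure.toModelCategory {C : Type u} [Category.{v} C] [HasFiniteLimits C]
    [HasFiniteColimits C] (M : ModelStructure C) : ModelCategory C :=
  letI i1 : CategoryWithFibrations C := ⟨M.Fib⟩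
  letI i2 : CategoryWithCofibrations C := ⟨M.Cof⟩
  letI i3 : CategoryWithWeakEquivalences C := ⟨M.W⟩
  have ret : ∀ {X Y Z W : C} {f : X ⟶ Y} {g : Z ⟶ W}, RetractArrow f g → IsRetractOf f g :=
    fun h => ⟨h.i.left, h.r.left, h.i.right, h.r.right, h.retract_left, h.retract_right,
      h.i_w, h.r_w.symm⟩
  { categoryWithFibrations := i1
    categoryWithCofibrations := i2
    categoryWithWeakEquivalences := i3
    cm2 :=
      { comp_mem := fun f g hf hg => M.W_comp f g hf hg
        of_postcomp := fun f g hg hfg => M.W_cancel_right f g hg hfg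
        of_precomp := fun f g hf hfg => M.W_cancel_left f g hf hfg }
    cm3a := ⟨fun h hg => M.W_retract _ _ (ret h) hg⟩
    cm3b := ⟨fun h hg => M.Fib_retract _ _ (ret h) hg⟩
    cm3c := ⟨fun h hg => M.Cof_retract _ _ (ret h) hg⟩
    cm4a := fun i p hi hw hp => M.lift_trivCof_fib i p hi.mem hw.mem hp.mem
    cm4b := fun i p hi hp hw => M.lift_cof_trivFib i p hi.mem hp.mem hw.mem
    cm5a := ⟨fun f => by
      obtain ⟨Z, i, p, h1, h2, h3, h4⟩ := M.factor_trivCof_fib f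
      exact ⟨⟨Z, i, p, h4, ⟨h1, h2⟩, h3⟩⟩⟩
    cm5b := ⟨fun f => by
      obtain ⟨Z, i, p, h1, h2, h3, h4⟩ := M.factor_cof_trivFib f
      exact ⟨⟨Z, i, p, h4, h1, ⟨h2, h3⟩⟩⟩⟩ }

/-- In a model category `C` with products indexed by `I`, for a family of
fibrant objects `A i`, the image of `∏ A` under the localization functor `γ : C ⥤ Ho(C)`,
together with the images of the projections, is a product of the `γ(A i)` in `Ho(C)`. -/
theorem stmt_5 {C : Type u} [Category.{v} C] [HasFiniteLimits C] [HasFiniteColimits C]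
    (M : ModelStructure C) {I : Type w} [HasProductsOfShape I C]
    (A : I → C) (hA : ∀ i, M.Fibrant (A i)) :
    Nonempty (IsLimit (Fan.mk (M.W.Q.obj (∏ᶜ A)) (fun i => M.W.Q.map (Pi.π A i)))) := by
  letI := M.toModelCategory
  have : ∀ i, HomotopicalAlgebra.IsFibrant (A i) := fun i => ⟨hA i⟩
  haveI : M.W.Q.IsLocalization (HomotopicalAlgebra.weakEquivalences C) :=
    inferInstanceAs (M.W.Q.IsLocalization M.W)
  exact isLimit_pi_aux A M.W.Q
end

section
/- Let C be a model category whose underlying category is preadditive and has binary biproducts, and let γ : C ⟶ Ho(C) denote the localization functor at the weak equivalences. Then for any objects A, B of C, the object γ(A ⊕ B) together with the images under γ of the biproduct projections A ⊕ B ⟶ A and A ⊕ B ⟶ B is a product of γ(A) and γ(B) in Ho(C), and together with the images under γ of the biproduct inclusions A ⟶ A ⊕ B and B ⟶ A ⊕ B is a coproduct of γ(A) and γ(B) in Ho(C). -/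
open CategoryTheory CategoryTheory.Limits

universe v u

namespace ModelStructure

section Aux

variable {C : Type u} [Category.{v} C] [HasFiniteLimits C] [HasFiniteColimits C]

lemma W_iso (M : ModelStructure C) {X Y : C} (e : X ⟶ Y) [IsIso e] : M.W e := by
  obtain ⟨Z, i, p, -, -, hp, h⟩ := M.factor_cof_trivFib (𝟙 X)
  have hid : M.W (𝟙 X) :=
    M.W_retract (𝟙 X) p ⟨i, p, 𝟙 X, 𝟙 X, h, by simp, by simp [h], by simp⟩ hp
  exact M.W_retract e (𝟙 X) ⟨𝟙 X, 𝟙 X, inv e, e, by simp, by simp, by simp, by simp⟩ hid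

variable [Preadditive C] [HasBinaryBiproducts C]

lemma W_biprod_trivFib (M : ModelStructure C) {X X' Y Y' : C} (p : X ⟶ X') (q : Y ⟶ Y')
    (hp : M.Fib p) (hp' : M.W p) (hq : M.Fib q) (hq' : M.W q) : M.W (biprod.map p q) := by
  obtain ⟨Z, k, r, hk, -, hr, h⟩ := M.factor_cof_trivFib (biprod.map p q)
  have := M.lift_cof_trivFib k p hk hp hp'
  have := M.lift_cof_trivFib k q hk hq hq'
  have sq1 : CommSq biprod.fst k p (r ≫ biprod.fst) := ⟨by rw [reassoc_of% h]; simp⟩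
  have sq2 : CommSq biprod.snd k q (r ≫ biprod.snd) := ⟨by rw [reassoc_of% h]; simp⟩
  refine M.W_retract _ r ⟨k, biprod.lift sq1.lift sq2.lift, 𝟙 _, 𝟙 _, ?_, by simp, by simp [h], ?_⟩ hr
  · ext <;> simp
  · ext <;> simp

lemma W_biprod_trivCof (M : ModelStructure C) {X X' Y Y' : C} (i : X ⟶ X') (j : Y ⟶ Y')
    (hi : M.Cof i) (hi' : M.W i) (hj : M.Cof j) (hj' : M.W j) : M.W (biprod.map i j) := by
  obtain ⟨Z, k, r, -, hk, hr, h⟩ := M.factor_trivCof_fib (biprod.map i j)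
  have := M.lift_trivCof_fib i r hi hi' hr
  have := M.lift_trivCof_fib j r hj hj' hr
  have sq1 : CommSq (biprod.inl ≫ k) i r biprod.inl := ⟨by rw [Category.assoc, h]; simp⟩
  have sq2 : CommSq (biprod.inr ≫ k) j r biprod.inr := ⟨by rw [Category.assoc, h]; simp⟩
  refine M.W_retract _ k ⟨𝟙 _, 𝟙 _, biprod.desc sq1.lift sq2.lift, r, by simp, ?_, ?_, by simp [h]⟩ hk
  · ext <;> simp
  · ext <;> simp

lemma W_biprod (M : ModelStructure C) {X X' Y Y' : C} (f : X ⟶ X') (g : Y ⟶ Y')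
    (hf : M.W f) (hg : M.W g) : M.W (biprod.map f g) := by
  obtain ⟨Z, i, p, hi, hp, hp', rfl⟩ := M.factor_cof_trivFib f
  obtain ⟨T, j, q, hj, hq, hq', rfl⟩ := M.factor_cof_trivFib g
  have hi' := M.W_cancel_right _ _ hp' hf
  have hj' := M.W_cancel_right _ _ hq' hg
  have : biprod.map (i ≫ p) (j ≫ q) = biprod.map i j ≫ biprod.map p q := by ext <;> simp
  rw [this]
  exact M.W_comp _ _ (M.W_biprod_trivCof i j hi hi' hj hj') (M.W_biprod_trivFib p q hp hp' hq hq')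

end Aux

end ModelStructure

/-- A localization functor for a class stable under binary products preserves them. -/
lemma isLimit_map_of_stable {D : Type*} [Category* D] {E : Type*} [Category* E]
    (L : D ⥤ E) (W : MorphismProperty D) [L.IsLocalization W]
    [W.ContainsIdentities] [HasBinaryProducts D]
    (hW : ∀ {X X' Y Y' P P' : D} (a : P ⟶ X) (b : P ⟶ Y) (a' : P' ⟶ X') (b' : P' ⟶ Y')
      (_ : IsLimit (BinaryFan.mk a b)) (_ : IsLimit (BinaryFan.mk a' b'))
      (f : X ⟶ X') (g : Y ⟶ Y') (φ : P ⟶ P'),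
      W f → W g → φ ≫ a' = a ≫ f → φ ≫ b' = b ≫ g → W φ)
    {X Y P : D} (a : P ⟶ X) (b : P ⟶ Y) (h : IsLimit (BinaryFan.mk a b)) :
    Nonempty (IsLimit (BinaryFan.mk (L.map a) (L.map b))) := by
  have : W.IsStableUnderProductsOfShape WalkingPair := by
    constructor
    intro F G c c' hc hc' f hf φ hφ
    have key : ∀ {F : Discrete WalkingPair ⥤ D} (c : Cone F), IsLimit c →
        Nonempty (IsLimit (BinaryFan.mk (c.π.app ⟨.left⟩) (c.π.app ⟨.right⟩))) := by
      intro F c hc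
      refine ⟨IsLimit.ofIsoLimit ((IsLimit.postcomposeHomEquiv (diagramIsoPair F) c).symm hc) ?_⟩
      exact Cone.ext (Iso.refl _) (by rintro ⟨_ | _⟩ <;> simp)
    exact hW _ _ _ _ (key c hc).some (key c' hc').some
      (f.app ⟨.left⟩) (f.app ⟨.right⟩) φ (hf _) (hf _) (hφ _) (hφ _)
  have := Localization.preservesProductsOfShape L W WalkingPair
  exact ⟨mapIsLimitOfPreservesOfIsLimit L a b h⟩

/-- In a preadditive model category with binary biproducts, for objects
`A, B`, the image of `A ⊞ B` under the localization functor `γ : C ⥤ Ho(C)` together with the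
images of the biproduct projections is a product of `γ(A)` and `γ(B)` in `Ho(C)`, and
together with the images of the biproduct inclusions it is a coproduct of `γ(A)` and `γ(B)`
in `Ho(C)`. -/
theorem stmt_7 {C : Type u} [Category.{v} C] [Preadditive C] [HasBinaryBiproducts C]
    [HasFiniteLimits C] [HasFiniteColimits C] (M : ModelStructure C) (A B : C) :
    Nonempty (IsLimit (BinaryFan.mk
      (M.W.Q.map (biprod.fst : A ⊞ B ⟶ A)) (M.W.Q.map (biprod.snd : A ⊞ B ⟶ B)))) ∧
    Nonempty (IsColimit (BinaryCofan.mk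
      (M.W.Q.map (biprod.inl : A ⟶ A ⊞ B)) (M.W.Q.map (biprod.inr : B ⟶ A ⊞ B)))) := by
  have : M.W.ContainsIdentities := ⟨fun X => M.W_iso (𝟙 X)⟩
  constructor
  · refine isLimit_map_of_stable M.W.Q M.W ?_ _ _ (BinaryBiproduct.isLimit A B)
    intro X X' Y Y' P P' a b a' b' hc hc' f g φ hf hg h1 h2
    let e : P ≅ X ⊞ Y := hc.conePointUniqueUpToIso (BinaryBiproduct.isLimit X Y)
    let e' : P' ≅ X' ⊞ Y' := hc'.conePointUniqueUpToIso (BinaryBiproduct.isLimit X' Y')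
    have e1 : e.hom ≫ biprod.fst = a :=
      hc.conePointUniqueUpToIso_hom_comp (BinaryBiproduct.isLimit X Y) ⟨.left⟩
    have e2 : e.hom ≫ biprod.snd = b :=
      hc.conePointUniqueUpToIso_hom_comp (BinaryBiproduct.isLimit X Y) ⟨.right⟩
    have e1' : e'.inv ≫ a' = biprod.fst :=
      hc'.conePointUniqueUpToIso_inv_comp (BinaryBiproduct.isLimit X' Y') ⟨.left⟩
    have e2' : e'.inv ≫ b' = biprod.snd :=
      hc'.conePointUniqueUpToIso_inv_comp (BinaryBiproduct.isLimit X' Y') ⟨.right⟩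
    have : φ = e.hom ≫ biprod.map f g ≫ e'.inv := by
      apply BinaryFan.IsLimit.hom_ext hc'
      · change φ ≫ a' = _ ≫ a'
        rw [h1, Category.assoc, Category.assoc, e1', biprod.map_fst, reassoc_of% e1]
      · change φ ≫ b' = _ ≫ b'
        rw [h2, Category.assoc, Category.assoc, e2', biprod.map_snd, reassoc_of% e2]
    rw [this]
    exact M.W_comp _ _ (M.W_iso _) (M.W_comp _ _ (M.W_biprod f g hf hg) (M.W_iso _))
  · have : M.W.op.ContainsIdentities := ⟨fun X => M.W_iso (𝟙 X.unop)⟩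
    have key : Nonempty (IsLimit (BinaryFan.mk
        (M.W.Q.op.map (biprod.inl : A ⟶ A ⊞ B).op)
        (M.W.Q.op.map (biprod.inr : B ⟶ A ⊞ B).op))) := by
      refine isLimit_map_of_stable M.W.Q.op M.W.op ?_ _ _
        (BinaryCofan.IsColimit.op (BinaryBiproduct.isColimit A B))
      intro X X' Y Y' P P' a₁ a₂ a₁' a₂' hc hc' f g φ hf hg h1 h2
      have hd : IsColimit (BinaryCofan.mk a₁.unop a₂.unop) := BinaryFan.IsLimit.unop hc
      have hd' : IsColimit (BinaryCofan.mk a₁'.unop a₂'.unop) := BinaryFan.IsLimit.unop hc'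
      let b := BinaryBiproduct.isColimit X.unop Y.unop
      let b' := BinaryBiproduct.isColimit X'.unop Y'.unop
      let e : P.unop ≅ X.unop ⊞ Y.unop := hd.coconePointUniqueUpToIso b
      let e' : P'.unop ≅ X'.unop ⊞ Y'.unop := hd'.coconePointUniqueUpToIso b'
      have e1 : biprod.inl ≫ e.inv = a₁.unop :=
        hd.comp_coconePointUniqueUpToIso_inv b ⟨.left⟩
      have e2 : biprod.inr ≫ e.inv = a₂.unop :=
        hd.comp_coconePointUniqueUpToIso_inv b ⟨.right⟩
      have e1' : a₁'.unop ≫ e'.hom = biprod.inl :=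
        hd'.comp_coconePointUniqueUpToIso_hom b' ⟨.left⟩
      have e2' : a₂'.unop ≫ e'.hom = biprod.inr :=
        hd'.comp_coconePointUniqueUpToIso_hom b' ⟨.right⟩
      have h1' : a₁'.unop ≫ φ.unop = f.unop ≫ a₁.unop := congrArg Quiver.Hom.unop h1
      have h2' : a₂'.unop ≫ φ.unop = g.unop ≫ a₂.unop := congrArg Quiver.Hom.unop h2
      have : φ.unop = e'.hom ≫ biprod.map f.unop g.unop ≫ e.inv := by
        apply BinaryCofan.IsColimit.hom_ext hd'
        · change a₁'.unop ≫ _ = a₁'.unop ≫ _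
          rw [h1', reassoc_of% e1', biprod.inl_map_assoc, e1]
        · change a₂'.unop ≫ _ = a₂'.unop ≫ _
          rw [h2', reassoc_of% e2', biprod.inr_map_assoc, e2]
      change M.W φ.unop
      rw [this]
      exact M.W_comp _ _ (M.W_iso _) (M.W_comp _ _ (M.W_biprod _ _ hf hg) (M.W_iso _))
    exact ⟨BinaryFan.IsLimit.unop key.some⟩
end

section
/- Let C be a model category and let X and Y be objects of C that are both fibrant and cofibrant. Let γ : C ⟶ Ho(C) denote the localization functor at the weak equivalences. Then every isomorphism γ(X) ≅ γ(Y) in Ho(C) is equal to γ(w) for some weak equivalence w : X ⟶ Y in C. -/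
open CategoryTheory CategoryTheory.Limits

universe v u

namespace Stmt9Aux

open HomotopicalAlgebra

/-- A morphism between bifibrant objects which becomes invertible in the homotopy category is a
weak equivalence. -/
lemma weakEquivalence_of_isIso {C : Type*} [Category* C] [ModelCategory C]
    {H : Type*} [Category* H] (L : C ⥤ H) [L.IsLocalization (weakEquivalences C)]
    {X Y : C} [IsCofibrant X] [IsFibrant X] [IsCofibrant Y] [IsFibrant Y]
    (f : X ⟶ Y) [IsIso (L.map f)] : WeakEquivalence f := by
  obtain ⟨d⟩ := MorphismProperty.HasFactorization.nonempty_mapFactorizationData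
    (W₁ := trivialCofibrations C) (W₂ := fibrations C) f
  obtain ⟨Z, i, p, fac, hi, hp⟩ := d
  obtain ⟨_, _⟩ := (mem_trivialCofibrations_iff i).1 hi
  rw [← fibration_iff] at hp
  have : IsCofibrant Z := isCofibrant_of_cofibration i
  have : IsFibrant Z := isFibrant_of_fibration p
  have hLi : IsIso (L.map i) := Localization.inverts L (weakEquivalences C) i
    (mem_weakEquivalences i)
  have hLp : IsIso (L.map p) := by
    have h : L.map i ≫ L.map p = L.map f := by rw [← L.map_comp, fac]
    have : IsIso (L.map i ≫ L.map p) := by rw [h]; infer_instance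
    exact IsIso.of_isIso_comp_left (L.map i) (L.map p)
  obtain ⟨q, hq⟩ := map_surjective_of_isLocalization L Y Z (inv (L.map p))
  have h1 : LeftHomotopyRel (q ≫ p) (𝟙 Y) := by
    rw [LeftHomotopyRel.iff_map_eq L]
    simp [hq]
  obtain ⟨P, _, ⟨h⟩⟩ := h1.exists_good_cylinder
  obtain ⟨q', h', hh⟩ := h.covering_homotopy p q rfl
  have hq' : q' ≫ p = 𝟙 Y := by
    rw [← h'.h₁, Category.assoc, hh, h.h₁]
  have hLq : L.map q' = inv (L.map p) := by
    rw [← hq]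
    exact ((LeftHomotopyRel.iff_map_eq L _ _).1 h'.leftHomotopyRel).symm
  have h2 : LeftHomotopyRel (p ≫ q') (𝟙 Z) := by
    rw [LeftHomotopyRel.iff_map_eq L]
    simp [hLq]
  obtain ⟨P', ⟨h3⟩⟩ := h2
  have hw : WeakEquivalence (p ≫ q') := h3.weakEquivalence_iff.2 inferInstance
  have r : RetractArrow p (p ≫ q') :=
    { i := Arrow.homMk (𝟙 Z) q' (by simp)
      r := Arrow.homMk (𝟙 Z) p (by simp [hq'])
      retract := by ext <;> simp [hq'] }
  have : WeakEquivalence p :=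
    ⟨MorphismProperty.of_retract r (mem_weakEquivalences (p ≫ q'))⟩
  rw [← fac]
  infer_instance

/-- The Mathlib model category attached to a model structure. -/
@[reducible]
def toModelCategory {C : Type u} [Category.{v} C] [HasFiniteLimits C] [HasFiniteColimits C]
    (M : ModelStructure C) : ModelCategory C :=
  { categoryWithFibrations := ⟨M.Fib⟩
    categoryWithCofibrations := ⟨M.Cof⟩
    categoryWithWeakEquivalences := ⟨M.W⟩
    cm2 :=
      { comp_mem := fun f g hf hg => M.W_comp f g hf hg
        of_postcomp := fun f g hg hfg => M.W_cancel_right f g hg hfg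
        of_precomp := fun f g hf hfg => M.W_cancel_left f g hf hfg }
    cm3a := ⟨fun h hg => M.W_retract _ _ ⟨h.i.left, h.r.left, h.i.right, h.r.right,
      h.retract_left, h.retract_right, h.i_w, h.r_w.symm⟩ hg⟩
    cm3b := ⟨fun h hg => M.Fib_retract _ _ ⟨h.i.left, h.r.left, h.i.right, h.r.right,
      h.retract_left, h.retract_right, h.i_w, h.r_w.symm⟩ hg⟩
    cm3c := ⟨fun h hg => M.Cof_retract _ _ ⟨h.i.left, h.r.left, h.i.right, h.r.right,
      h.retract_left, h.retract_right, h.i_w, h.r_w.symm⟩ hg⟩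
    cm4a := fun i p hi hw hp => M.lift_trivCof_fib i p hi.mem hw.mem hp.mem
    cm4b := fun i p hi hp hw => M.lift_cof_trivFib i p hi.mem hp.mem hw.mem
    cm5a := ⟨fun f => by
      obtain ⟨Z, i, p, hi, hw, hp, fac⟩ := M.factor_trivCof_fib f
      exact ⟨⟨Z, i, p, fac, ⟨hi, hw⟩, hp⟩⟩⟩
    cm5b := ⟨fun f => by
      obtain ⟨Z, i, p, hi, hp, hw, fac⟩ := M.factor_cof_trivFib f
      exact ⟨⟨Z, i, p, fac, hi, ⟨hp, hw⟩⟩⟩⟩ }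

end Stmt9Aux

/-- In a model category, if `X` and `Y` are both fibrant and cofibrant, then
every isomorphism `γ(X) ≅ γ(Y)` in the homotopy category is the image under the localization
functor `γ` of a weak equivalence `w : X ⟶ Y`. -/
theorem stmt_9 {C : Type u} [Category.{v} C] [HasFiniteLimits C] [HasFiniteColimits C]
    (M : ModelStructure C) (X Y : C)
    (hXf : M.Fibrant X) (hXc : M.Cofibrant X) (hYf : M.Fibrant Y) (hYc : M.Cofibrant Y)
    (e : M.W.Q.obj X ≅ M.W.Q.obj Y) :
    ∃ w : X ⟶ Y, M.W w ∧ M.W.Q.map w = e.hom := by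
  letI := Stmt9Aux.toModelCategory M
  haveI : HomotopicalAlgebra.IsFibrant X := ⟨hXf⟩
  haveI : HomotopicalAlgebra.IsCofibrant X := ⟨hXc⟩
  haveI : HomotopicalAlgebra.IsFibrant Y := ⟨hYf⟩
  haveI : HomotopicalAlgebra.IsCofibrant Y := ⟨hYc⟩
  haveI : M.W.Q.IsLocalization (HomotopicalAlgebra.weakEquivalences C) :=
    inferInstanceAs (M.W.Q.IsLocalization M.W)
  obtain ⟨w, hw⟩ := HomotopicalAlgebra.map_surjective_of_isLocalization M.W.Q X Y e.hom
  haveI : IsIso (M.W.Q.map w) := by rw [hw]; infer_instance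
  exact ⟨w, (Stmt9Aux.weakEquivalence_of_isIso M.W.Q w).mem, hw⟩
end
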